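/- arXiv:2510.01732 — 2 statements merged into one kernel-verified Lean document; each statement's English description precedes it below -/
import Mathlib

section
/- Let x₀ < x₁ be real numbers, Ω := (x₀,x₁) × (−1,1), Ω⁺ := (x₀,x₁) × (0,1) and Ω⁻ := (x₀,x₁) × (−1,0). Let f be continuously differentiable on an open neighborhood of the closure of Ω, let δ₀ : [0,1] → ℝ and δ₁ : [−1,0] → ℝ be twice continuously differentiable, and let w be twice continuously differentiable on an open neighborhood of the closure of Ω satisfying: y·∂ₓw − ∂²_{yy}w = ∂ₓf at every point of Ω; y·w(x₀,y) = f(x₀,y) + δ₀''(y) for every y ∈ (0,1); and y·w(x₁,y) = f(x₁,y) + δ₁''(y) for every y ∈ (−1,0). Define ũ(x,y) := δ₀(y) + ∫_{x₀}^{x} w(s,y) ds for (x,y) with y ∈ (0,1), and ũ(x,y) := δ₁(y) − ∫_{x}^{x₁} w(s,y) ds for (x,y) with y ∈ (−1,0). Then y·∂ₓũ − ∂²_{yy}ũ = f at every point of Ω⁺ ∪ Ω⁻, and ũ(x₀,y) = δ₀(y) for y ∈ (0,1) and ũ(x₁,y) = δ₁(y) for y ∈ (−1,0). -/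
open Set MeasureTheory

/-- `ũ(x,y) = δ₀(y) + ∫_{x₀}^{x} w(s,y) ds`, the candidate solution on the upper half
`Ω⁺ = (x₀,x₁) × (0,1)`. -/
noncomputable def uPlus (δ₀ : ℝ → ℝ) (w : ℝ → ℝ → ℝ) (x₀ : ℝ) (x y : ℝ) : ℝ :=
  δ₀ y + ∫ s in x₀..x, w s y

/-- `ũ(x,y) = δ₁(y) - ∫_{x}^{x₁} w(s,y) ds`, the candidate solution on the lower half
`Ω⁻ = (x₀,x₁) × (-1,0)`. -/
noncomputable def uMinus (δ₁ : ℝ → ℝ) (w : ℝ → ℝ → ℝ) (x₁ : ℝ) (x y : ℝ) : ℝ :=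
  δ₁ y - ∫ s in x..x₁, w s y

/-! Differentiating `δ + ∫ w` twice in `y` under the integral gives `δ'' + ∫ ∂_yy w`. The equation
says that `∂_yy w = ∂ₓ (y w - f)`, so this integral is the difference of `y w - f` at its two ends,
and the lateral condition is exactly what makes the term at the lateral boundary cancel `δ''`. The
two halves of the domain are the same statement, because `δ - ∫_x^{x₁} w = δ + ∫_{x₁}^x w`. -/

open Function Topology

section Slices

variable {𝕜 F E : Type*} [NontriviallyNormedField 𝕜] [NormedAddCommGroup F] [NormedSpace 𝕜 F]
  [NormedAddCommGroup E] [NormedSpace 𝕜 E] {w : F → 𝕜 → E} {U : Set (F × 𝕜)}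
  {m n : WithTop ℕ∞} {x : F} {y : 𝕜}

lemma contDiffAt_slice_left (hU : IsOpen U) (hw : ContDiffOn 𝕜 n (uncurry w) U)
    (hxy : (x, y) ∈ U) : ContDiffAt 𝕜 n (fun s => w s y) x :=
  (hw.contDiffAt (hU.mem_nhds hxy)).comp x (contDiffAt_id.prodMk contDiffAt_const)

lemma contDiffAt_slice_right (hU : IsOpen U) (hw : ContDiffOn 𝕜 n (uncurry w) U)
    (hxy : (x, y) ∈ U) : ContDiffAt 𝕜 n (w x) y :=
  (hw.contDiffAt (hU.mem_nhds hxy)).comp y (contDiffAt_const.prodMk contDiffAt_id)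

lemma deriv_slice_right_eq_fderiv (hw : DifferentiableAt 𝕜 (uncurry w) (x, y)) :
    deriv (w x) y = fderiv 𝕜 (uncurry w) (x, y) (0, 1) :=
  (hw.hasFDerivAt.comp_hasDerivAt y ((hasDerivAt_const y x).prodMk (hasDerivAt_id y))).deriv

lemma contDiffOn_uncurry_deriv (hU : IsOpen U) (hw : ContDiffOn 𝕜 n (uncurry w) U)
    (hmn : m + 1 ≤ n) : ContDiffOn 𝕜 m (uncurry fun s => deriv (w s)) U :=
  ((hw.fderiv_of_isOpen hU hmn).clm_apply contDiffOn_const).congr fun _ hp =>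
    deriv_slice_right_eq_fderiv <|
      (hw.contDiffAt (hU.mem_nhds hp)).differentiableAt
        (ne_of_gt <| zero_lt_one.trans_le <| le_add_self.trans hmn)

end Slices

section ParametricIntegral

variable {E : Type*} [NormedAddCommGroup E] {w : ℝ → ℝ → E}
  {U : Set (ℝ × ℝ)} {V : Set ℝ} {a b y : ℝ}

lemma intervalIntegrable_slice (hw : ContinuousOn (uncurry w) U) (hUV : uIcc a b ×ˢ V ⊆ U)
    (hy : y ∈ V) : IntervalIntegrable (fun s => w s y) volume a b :=
  ((hw.mono hUV).uncurry_right y hy).intervalIntegrable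

variable [NormedSpace ℝ E]

lemma hasDerivAt_integral_of_contDiffOn (hU : IsOpen U) (hw : ContDiffOn ℝ 1 (uncurry w) U)
    (hV : IsOpen V) (hUV : uIcc a b ×ˢ V ⊆ U) (hy : y ∈ V) :
    HasDerivAt (fun t => ∫ s in a..b, w s t) (∫ s in a..b, deriv (w s) y) y := by
  have hw' : ContinuousOn (uncurry fun s => deriv (w s)) U :=
    (contDiffOn_uncurry_deriv (m := 0) hU hw (by norm_num)).continuousOn
  obtain ⟨K, hK, hyK, hKV⟩ := exists_compact_subset hV hy
  obtain ⟨C, hC⟩ := (isCompact_uIcc.prod hK).exists_bound_of_continuousOn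
    (hw'.mono ((prod_mono_right hKV).trans hUV))
  refine (intervalIntegral.hasDerivAt_integral_of_dominated_loc_of_deriv_le
    (F := fun t s => w s t) (bound := fun _ => C) (mem_interior_iff_mem_nhds.1 hyK)
    ?_ (intervalIntegrable_slice hw.continuousOn hUV hy)
    (intervalIntegrable_slice hw' hUV hy).aestronglyMeasurable_restrict_uIoc
    (.of_forall fun s hs t ht => hC (s, t) ⟨uIoc_subset_uIcc hs, ht⟩)
    intervalIntegrable_const (.of_forall fun s hs t ht => ?_)).2
  · filter_upwards [hV.mem_nhds hy] with t ht
    exact (intervalIntegrable_slice hw.continuousOn hUV ht).aestronglyMeasurable_restrict_uIoc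
  · exact ((contDiffAt_slice_right hU hw (hUV ⟨uIoc_subset_uIcc hs, hKV ht⟩)).differentiableAt
      one_ne_zero).hasDerivAt

lemma hasDerivAt_deriv_integral_of_contDiffOn (hU : IsOpen U)
    (hw : ContDiffOn ℝ 2 (uncurry w) U) (hV : IsOpen V) (hUV : uIcc a b ×ˢ V ⊆ U) (hy : y ∈ V) :
    HasDerivAt (deriv fun t => ∫ s in a..b, w s t) (∫ s in a..b, deriv (deriv (w s)) y) y := by
  have hw' : ContDiffOn ℝ 1 (uncurry fun s => deriv (w s)) U :=
    contDiffOn_uncurry_deriv hU hw (by norm_num)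
  refine (hasDerivAt_integral_of_contDiffOn hU hw' hV hUV hy).congr_of_eventuallyEq ?_
  filter_upwards [hV.mem_nhds hy] with t ht
  exact (hasDerivAt_integral_of_contDiffOn hU (hw.of_le one_le_two) hV hUV ht).deriv

lemma deriv_deriv_add_integral_of_contDiffOn {δ : ℝ → E} (hδ : ContDiffOn ℝ 2 δ V) (hU : IsOpen U)
    (hw : ContDiffOn ℝ 2 (uncurry w) U) (hV : IsOpen V) (hUV : uIcc a b ×ˢ V ⊆ U) (hy : y ∈ V) :
    deriv (deriv fun t => δ t + ∫ s in a..b, w s t) y =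
      deriv (deriv δ) y + ∫ s in a..b, deriv (deriv (w s)) y := by
  have hderiv : deriv (fun t => δ t + ∫ s in a..b, w s t) =ᶠ[𝓝 y]
      deriv δ + deriv fun t => ∫ s in a..b, w s t := by
    filter_upwards [hV.mem_nhds hy] with t ht
    exact deriv_fun_add ((hδ.contDiffAt (hV.mem_nhds ht)).differentiableAt two_ne_zero)
      (hasDerivAt_integral_of_contDiffOn hU (hw.of_le one_le_two) hV hUV ht).differentiableAt
  have hδ' : DifferentiableAt ℝ (deriv δ) y :=
    ((hδ.deriv_of_isOpen hV (m := 1) (by norm_num)).differentiableOn one_ne_zero).differentiableAt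
      (hV.mem_nhds hy)
  rw [hderiv.deriv_eq]
  exact (hδ'.hasDerivAt.add (hasDerivAt_deriv_integral_of_contDiffOn hU hw hV hUV hy)).deriv

variable [CompleteSpace E]

lemma deriv_integral_slice_right (hU : IsOpen U) (hw : ContinuousOn (uncurry w) U)
    (hUV : uIcc a b ×ˢ V ⊆ U) (hy : y ∈ V) :
    deriv (fun s => ∫ t in a..s, w t y) b = w b y := by
  have hUy : IsOpen {s | (s, y) ∈ U} := hU.preimage (by fun_prop)
  have hwy : ContinuousOn (fun s => w s y) {s | (s, y) ∈ U} :=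
    hw.comp (f := fun s => (s, y)) (by fun_prop) fun _ => id
  have hb : {s | (s, y) ∈ U} ∈ 𝓝 b := hUy.mem_nhds (hUV ⟨right_mem_uIcc, hy⟩)
  exact intervalIntegral.deriv_integral_right (intervalIntegrable_slice hw hUV hy)
    (hwy.stronglyMeasurableAtFilter hUy b (mem_of_mem_nhds hb)) (hwy.continuousAt hb)

lemma integral_deriv_deriv_eq_sub {f : ℝ → ℝ → E} {k : ℝ} (hU : IsOpen U)
    (hw : ContDiffOn ℝ 2 (uncurry w) U) (hUV : uIcc a b ×ˢ V ⊆ U) (hy : y ∈ V)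
    (hf : ContinuousOn (fun s => f s y) (uIcc a b))
    (hf' : DifferentiableOn ℝ (fun s => f s y) (uIoo a b))
    (heq : ∀ x ∈ uIoo a b,
      k • deriv (fun s => w s y) x - deriv (deriv (w x)) y = deriv (fun s => f s y) x) :
    ∫ s in a..b, deriv (deriv (w s)) y = (k • w b y - f b y) - (k • w a y - f a y) := by
  have hwyy : ContinuousOn (uncurry fun s => deriv (deriv (w s))) U :=
    (contDiffOn_uncurry_deriv (m := 0) hU
      (contDiffOn_uncurry_deriv (m := 1) hU hw (by norm_num)) (by norm_num)).continuousOn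
  refine intervalIntegral.integral_eq_sub_of_hasDeriv_right (f := fun s => k • w s y - f s y)
    ((((hw.continuousOn.mono hUV).uncurry_right y hy).const_smul k).sub hf) (fun x hx => ?_)
    (intervalIntegrable_slice hwyy hUV hy)
  have hwx : DifferentiableAt ℝ (fun s => w s y) x :=
    (contDiffAt_slice_left hU hw (hUV ⟨uIoo_subset_uIcc_self hx, hy⟩)).differentiableAt two_ne_zero
  have hfx : DifferentiableAt ℝ (fun s => f s y) x :=
    hf'.differentiableAt (isOpen_Ioo.mem_nhds hx)
  have hyy : deriv (deriv (w x)) y =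
      k • deriv (fun s => w s y) x - deriv (fun s => f s y) x := by
    rw [← heq x hx, sub_sub_cancel]
  rw [hyy]
  exact ((hwx.hasDerivAt.const_smul k).sub hfx.hasDerivAt).hasDerivWithinAt

end ParametricIntegral

theorem stmt14_general {E : Type*} [NormedAddCommGroup E] [NormedSpace ℝ E] [CompleteSpace E]
    {I V : Set ℝ} (hI : I.OrdConnected) (hV : IsOpen V) (k : ℝ → ℝ) {f w : ℝ → ℝ → E} {δ : ℝ → E}
    (hf : ∀ y ∈ V, ContinuousOn (fun s => f s y) I)
    (hf' : ∀ y ∈ V, DifferentiableOn ℝ (fun s => f s y) (interior I)) (hδ : ContDiffOn ℝ 2 δ V)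
    {U : Set (ℝ × ℝ)} (hU : IsOpen U) (hUIV : I ×ˢ V ⊆ U) (hw : ContDiffOn ℝ 2 (uncurry w) U)
    (hweq : ∀ x ∈ interior I, ∀ y ∈ V,
      k y • deriv (fun s => w s y) x - deriv (deriv (w x)) y = deriv (fun s => f s y) x)
    {c : ℝ} (hc : c ∈ I) (hbc : ∀ y ∈ V, k y • w c y = f c y + deriv (deriv δ) y)
    {x : ℝ} (hx : x ∈ I) {y : ℝ} (hy : y ∈ V) :
    k y • deriv (fun s => δ y + ∫ t in c..s, w t y) x
      - deriv (deriv fun t => δ t + ∫ s in c..x, w s t) y = f x y := by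
  have hcx : uIcc c x ⊆ I := hI.uIcc_subset hc hx
  have hcx' : uIoo c x ⊆ interior I := interior_maximal (uIoo_subset_uIcc_self.trans hcx) isOpen_Ioo
  have hUV : uIcc c x ×ˢ V ⊆ U := (prod_mono_left hcx).trans hUIV
  rw [deriv_const_add, deriv_integral_slice_right hU hw.continuousOn hUV hy,
    deriv_deriv_add_integral_of_contDiffOn hδ hU hw hV hUV hy,
    integral_deriv_deriv_eq_sub hU hw hUV hy ((hf y hy).mono hcx) ((hf' y hy).mono hcx')
      fun s hs => hweq s (hcx' hs) y hy, hbc y hy]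
  abel

lemma uMinus_eq_uPlus (δ : ℝ → ℝ) (w : ℝ → ℝ → ℝ) (c : ℝ) : uMinus δ w c = uPlus δ w c := by
  funext x y
  rw [uMinus, uPlus, intervalIntegral.integral_symm, sub_neg_eq_add]

/-- If `w` solves the differentiated problem `y ∂ₓ w - ∂_yy w = ∂ₓ f` with lateral data
`y w(xᵢ,y) = f(xᵢ,y) + δᵢ''(y)`, then `ũ` (defined by integrating `w` in `x` from the
relevant lateral boundary) solves `y ∂ₓ ũ - ∂_yy ũ = f` on `Ω⁺ ∪ Ω⁻` and attains the
lateral data `δ₀` on `Σ₀` and `δ₁` on `Σ₁`. -/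
theorem stmt14 (x₀ x₁ : ℝ) (hx : x₀ < x₁) (f w : ℝ → ℝ → ℝ) (δ₀ δ₁ : ℝ → ℝ)
    (Uf : Set (ℝ × ℝ)) (hUf : IsOpen Uf)
    (hΩUf : closure (Ioo x₀ x₁ ×ˢ Ioo (-1 : ℝ) 1) ⊆ Uf)
    (hf : ContDiffOn ℝ 1 (fun p : ℝ × ℝ => f p.1 p.2) Uf)
    (hd₀ : ContDiffOn ℝ 2 δ₀ (Icc (0 : ℝ) 1))
    (hd₁ : ContDiffOn ℝ 2 δ₁ (Icc (-1 : ℝ) 0))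
    (Uw : Set (ℝ × ℝ)) (hUw : IsOpen Uw)
    (hΩUw : closure (Ioo x₀ x₁ ×ˢ Ioo (-1 : ℝ) 1) ⊆ Uw)
    (hw : ContDiffOn ℝ 2 (fun p : ℝ × ℝ => w p.1 p.2) Uw)
    (hweq : ∀ p ∈ Ioo x₀ x₁ ×ˢ Ioo (-1 : ℝ) 1,
      p.2 * deriv (fun s : ℝ => w s p.2) p.1 - deriv (deriv (w p.1)) p.2
        = deriv (fun s : ℝ => f s p.2) p.1)
    (hwbc0 : ∀ y ∈ Ioo (0 : ℝ) 1, y * w x₀ y = f x₀ y + deriv (deriv δ₀) y)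
    (hwbc1 : ∀ y ∈ Ioo (-1 : ℝ) 0, y * w x₁ y = f x₁ y + deriv (deriv δ₁) y) :
    (∀ x ∈ Ioo x₀ x₁, ∀ y ∈ Ioo (0 : ℝ) 1,
      y * deriv (fun s : ℝ => uPlus δ₀ w x₀ s y) x
        - deriv (deriv (uPlus δ₀ w x₀ x)) y = f x y) ∧
    (∀ x ∈ Ioo x₀ x₁, ∀ y ∈ Ioo (-1 : ℝ) 0,
      y * deriv (fun s : ℝ => uMinus δ₁ w x₁ s y) x
        - deriv (deriv (uMinus δ₁ w x₁ x)) y = f x y) ∧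
    (∀ y ∈ Ioo (0 : ℝ) 1, uPlus δ₀ w x₀ x₀ y = δ₀ y) ∧
    (∀ y ∈ Ioo (-1 : ℝ) 0, uMinus δ₁ w x₁ x₁ y = δ₁ y) := by
  rw [closure_prod_eq, closure_Ioo hx.ne, closure_Ioo (by norm_num)] at hΩUf hΩUw
  have hfx {y : ℝ} (hy : y ∈ Ioo (-1 : ℝ) 1) {x : ℝ} (hx : x ∈ Icc x₀ x₁) :
      DifferentiableAt ℝ (fun s => f s y) x :=
    (contDiffAt_slice_left hUf hf (hΩUf ⟨hx, Ioo_subset_Icc_self hy⟩)).differentiableAt one_ne_zero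
  have solves {α β c : ℝ} {δ : ℝ → ℝ} (hαβ : Ioo α β ⊆ Ioo (-1) 1) (hc : c ∈ Icc x₀ x₁)
      (hδ : ContDiffOn ℝ 2 δ (Icc α β))
      (hbc : ∀ y ∈ Ioo α β, y * w c y = f c y + deriv (deriv δ) y) :
      ∀ x ∈ Ioo x₀ x₁, ∀ y ∈ Ioo α β,
        y * deriv (fun s => uPlus δ w c s y) x - deriv (deriv (uPlus δ w c x)) y = f x y :=
    fun x hx y hy => stmt14_general ordConnected_Icc isOpen_Ioo id
      (fun y hy s hs => (hfx (hαβ hy) hs).continuousAt.continuousWithinAt)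
      (fun y hy s hs => (hfx (hαβ hy) (interior_subset hs)).differentiableWithinAt)
      (hδ.mono Ioo_subset_Icc_self) hUw
      ((prod_mono_right (hαβ.trans Ioo_subset_Icc_self)).trans hΩUw) hw
      (fun s hs t ht => hweq (s, t) ⟨interior_Icc.subset hs, hαβ ht⟩)
      hc hbc (Ioo_subset_Icc_self hx) hy
  rw [uMinus_eq_uPlus]
  exact ⟨solves (Ioo_subset_Ioo_left (by norm_num)) (left_mem_Icc.2 hx.le) hd₀ hwbc0,
    solves (Ioo_subset_Ioo_right (by norm_num)) (right_mem_Icc.2 hx.le) hd₁ hwbc1,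
    fun y _ => by simp [uPlus], fun y _ => by simp [uPlus]⟩
end

section
/- Let x₀ < x₁ be real numbers, Ω := (x₀,x₁) × (−1,1). Let f be continuously differentiable on an open neighborhood of the closure of Ω, let δ₀ : [0,1] → ℝ and δ₁ : [−1,0] → ℝ be twice continuously differentiable, and let w be twice continuously differentiable on an open neighborhood of the closure of Ω satisfying: y·∂ₓw − ∂²_{yy}w = ∂ₓf at every point of Ω; y·w(x₀,y) = f(x₀,y) + δ₀''(y) for every y ∈ (0,1); and y·w(x₁,y) = f(x₁,y) + δ₁''(y) for every y ∈ (−1,0). Define ũ(x,y) := δ₀(y) + ∫_{x₀}^{x} w(s,y) ds for y ∈ (0,1) and ũ(x,y) := δ₁(y) − ∫_{x}^{x₁} w(s,y) ds for y ∈ (−1,0). Assume the two orthogonality conditions: δ₀(0) − δ₁(0) + ∫_{x₀}^{x₁} w(s,0) ds = 0 and δ₀'(0) − δ₁'(0) + ∫_{x₀}^{x₁} ∂_yw(s,0) ds = 0. Then ũ extends to a function u on Ω which is continuously differentiable on Ω, twice continuously differentiable with respect to y on Ω, coincides with ũ on Ω ∩ {y ≠ 0}, and satisfies y·∂ₓu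 − ∂²_{yy}u = f at every point of Ω, including on the line {y = 0}. -/
open Set MeasureTheory

/-!
The extension `u` is obtained by integrating `w` in `x` from a trace on `{x = x₀}`, glued along
the interface `{y = c}` from `δ₀` above and the value of the lower candidate below. The two
orthogonality conditions say exactly that this trace and its `y`-derivative are continuous across
the interface. Its second derivative matches for free: integrating `α ∂ₓw - ∂_yy w = ∂ₓf` over
`(x₀, x)` gives `∫ ∂_yy w = [α w - f]`, and together with the lateral conditions this makes it equal
to `α w(x₀, ·) - f(x₀, ·)` on both sides. The same identity yields `∂_yy u = α w - f`, which is the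
equation for `u` because `∂ₓu = w`.
-/

open Filter Function Topology

variable {E : Type*} [NormedAddCommGroup E] [NormedSpace ℝ E]

section Calculus

variable {𝕜 F E₁ E₂ : Type*} [RCLike 𝕜] [NormedAddCommGroup F] [NormedSpace 𝕜 F]
  [NormedAddCommGroup E₁] [NormedSpace 𝕜 E₁] [NormedAddCommGroup E₂] [NormedSpace 𝕜 E₂]

lemma contDiffOn_one_of_hasFDerivAt_partial {f : E₁ → E₂ → F} {f₁ : E₁ → E₂ → E₁ →L[𝕜] F}
    {f₂ : E₁ → E₂ → E₂ →L[𝕜] F} {U : Set (E₁ × E₂)} (hU : IsOpen U)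
    (hf₁ : ∀ p ∈ U, HasFDerivAt (f · p.2) (f₁ p.1 p.2) p.1)
    (hf₂ : ∀ p ∈ U, HasFDerivAt (f p.1) (f₂ p.1 p.2) p.2)
    (hc₁ : ContinuousOn (uncurry f₁) U) (hc₂ : ContinuousOn (uncurry f₂) U) :
    ContDiffOn 𝕜 1 (uncurry f) U := by
  have hf : ∀ p ∈ U, HasFDerivAt (uncurry f) ((f₁ p.1 p.2).coprod (f₂ p.1 p.2)) p := fun p hp =>
    (hasStrictFDerivAt_uncurry_coprod (eventually_of_mem (hU.mem_nhds hp) hf₁)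
      (eventually_of_mem (hU.mem_nhds hp) hf₂) (hc₁.continuousAt (hU.mem_nhds hp))
      (hc₂.continuousAt (hU.mem_nhds hp))).hasFDerivAt
  have hc : ContinuousOn (fun p => (f₁ p.1 p.2).coprod (f₂ p.1 p.2)) U :=
    (ContinuousLinearMap.coprodEquivL (E := E₁) (F := E₂) (G := F) 𝕜).continuous.comp_continuousOn
      (hc₁.prodMk hc₂)
  rw [← zero_add (1 : WithTop ℕ∞), contDiffOn_succ_iff_fderiv_of_isOpen hU, contDiffOn_zero]
  exact ⟨fun p hp => (hf p hp).differentiableAt.differentiableWithinAt, by simp,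
    hc.congr fun p hp => (hf p hp).fderiv⟩

lemma contDiffOn_one_of_hasDerivAt_partial {f f₁ f₂ : 𝕜 → 𝕜 → F} {U : Set (𝕜 × 𝕜)} (hU : IsOpen U)
    (hf₁ : ∀ p ∈ U, HasDerivAt (f · p.2) (f₁ p.1 p.2) p.1)
    (hf₂ : ∀ p ∈ U, HasDerivAt (f p.1) (f₂ p.1 p.2) p.2)
    (hc₁ : ContinuousOn (uncurry f₁) U) (hc₂ : ContinuousOn (uncurry f₂) U) :
    ContDiffOn 𝕜 1 (uncurry f) U :=
  have toSpan := (ContinuousLinearMap.toSpanSingletonCLE (𝕜 := 𝕜) (E := F)).continuous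
  contDiffOn_one_of_hasFDerivAt_partial
    (f₁ := fun x y => .toSpanSingleton 𝕜 (f₁ x y)) (f₂ := fun x y => .toSpanSingleton 𝕜 (f₂ x y))
    hU (fun p hp => (hf₁ p hp).hasFDerivAt)
    (fun p hp => (hf₂ p hp).hasFDerivAt) (toSpan.comp_continuousOn hc₁)
    (toSpan.comp_continuousOn hc₂)

lemma differentiableOn_slice_fst {f : E₁ → E₂ → F} {U : Set (E₁ × E₂)} {X : Set E₁} {y : E₂}
    (hf : DifferentiableOn 𝕜 (uncurry f) U) (hXU : ∀ x ∈ X, (x, y) ∈ U) :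
    DifferentiableOn 𝕜 (fun x => f x y) X :=
  hf.comp (f := fun x => (x, y)) (differentiableOn_id.prodMk (differentiableOn_const y)) hXU

lemma deriv_deriv_eq_of_hasDerivAt {u u' u'' : 𝕜 → F} {s : Set 𝕜} (hs : IsOpen s)
    (hu : ∀ y ∈ s, HasDerivAt u (u' y) y) (hu' : ∀ y ∈ s, HasDerivAt u' (u'' y) y) {y : 𝕜}
    (hy : y ∈ s) : deriv (deriv u) y = u'' y := by
  have hderiv : deriv u =ᶠ[𝓝 y] u' := eventually_of_mem (hs.mem_nhds hy) fun z hz => (hu z hz).deriv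
  rw [hderiv.deriv_eq, (hu' y hy).deriv]

lemma contDiffOn_two_of_hasDerivAt {u u' u'' : 𝕜 → F} {s : Set 𝕜} (hs : IsOpen s)
    (hu : ∀ y ∈ s, HasDerivAt u (u' y) y) (hu' : ∀ y ∈ s, HasDerivAt u' (u'' y) y)
    (hc : ContinuousOn u'' s) : ContDiffOn 𝕜 2 u s := by
  have hu'₁ : ContDiffOn 𝕜 1 u' s := by
    rw [← zero_add (1 : WithTop ℕ∞), contDiffOn_succ_iff_deriv_of_isOpen hs, contDiffOn_zero]
    exact ⟨fun y hy => (hu' y hy).differentiableAt.differentiableWithinAt, by simp,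
      hc.congr fun y hy => (hu' y hy).deriv⟩
  rw [← one_add_one_eq_two, contDiffOn_succ_iff_deriv_of_isOpen hs]
  exact ⟨fun y hy => (hu y hy).differentiableAt.differentiableWithinAt, by simp,
    hu'₁.congr fun y hy => (hu y hy).deriv⟩

lemma hasDerivWithinAt_derivWithin_of_deriv_deriv_eq {δ g : 𝕜 → F} {s : Set 𝕜}
    (hs : UniqueDiffOn 𝕜 s) (hs' : s ⊆ closure (interior s)) (hδ : ContDiffOn 𝕜 2 δ s)
    (hg : ContinuousOn g s) (h : ∀ y ∈ interior s, deriv (deriv δ) y = g y) {y : 𝕜} (hy : y ∈ s) :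
    HasDerivWithinAt (derivWithin δ s) (g y) s y := by
  have hδ' : ContDiffOn 𝕜 1 (derivWithin δ s) s := hδ.derivWithin hs one_add_one_eq_two.le
  have heq : EqOn (derivWithin (derivWithin δ s) s) g (interior s) := by
    intro z hz
    rw [← h z hz, derivWithin_of_mem_nhds (mem_interior_iff_mem_nhds.1 hz)]
    refine EventuallyEq.deriv_eq ?_
    filter_upwards [isOpen_interior.mem_nhds hz] with t ht
    exact derivWithin_of_mem_nhds (mem_interior_iff_mem_nhds.1 ht)
  rw [← heq.of_subset_closure (hδ'.continuousOn_derivWithin hs le_rfl) hg interior_subset hs' hy]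
  exact (hδ'.differentiableOn one_ne_zero y hy).hasDerivWithinAt

lemma derivWithin_Ico_left {a b : ℝ} (hab : a < b) (δ : ℝ → E) :
    derivWithin δ (Ico a b) a = derivWithin δ (Icc a b) a := by
  rw [← Ici_inter_Iio, ← Ici_inter_Iic, derivWithin_inter (Iio_mem_nhds hab),
    derivWithin_inter (Iic_mem_nhds hab)]

lemma derivWithin_Ioc_right {a b : ℝ} (hab : a < b) (δ : ℝ → E) :
    derivWithin δ (Ioc a b) b = derivWithin δ (Icc a b) b := by
  rw [← Ioi_inter_Iic, ← Ici_inter_Iic, inter_comm, derivWithin_inter (Ioi_mem_nhds hab),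
    inter_comm, derivWithin_inter (Ici_mem_nhds hab)]

lemma hasDerivAt_ite_le {p q p' q' : ℝ → E} {c y : ℝ}
    (hp : c ≤ y → HasDerivWithinAt p (p' y) (Ici c) y)
    (hq : y ≤ c → HasDerivWithinAt q (q' y) (Iic c) y)
    (hpq : p c = q c) (hpq' : p' c = q' c) :
    HasDerivAt (fun z => if c ≤ z then p z else q z) (if c ≤ y then p' y else q' y) y := by
  rcases lt_trichotomy y c with hy | rfl | hy
  · rw [if_neg hy.not_ge]
    refine ((hq hy.le).hasDerivAt (Iic_mem_nhds hy)).congr_of_eventuallyEq ?_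
    filter_upwards [Iio_mem_nhds hy] with z hz using if_neg (not_le.2 hz)
  · have hright : HasDerivWithinAt (fun z => if y ≤ z then p z else q z) (p' y) (Ici y) y :=
      (hp le_rfl).congr (fun z hz => if_pos hz) (if_pos le_rfl)
    have hleft : HasDerivWithinAt (fun z => if y ≤ z then p z else q z) (p' y) (Iic y) y := by
      have hite : ∀ z ∈ Iic y, (if y ≤ z then p z else q z) = q z := fun z hz => by
        split_ifs with hyz
        · rw [le_antisymm hz hyz, hpq]
        · rfl
      rw [hpq']
      exact (hq le_rfl).congr hite (hite y self_mem_Iic)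
    rw [if_pos le_rfl, ← hasDerivWithinAt_univ, ← Iic_union_Ici]
    exact hleft.union hright
  · rw [if_pos hy.le]
    refine ((hp hy.le).hasDerivAt (Ici_mem_nhds hy)).congr_of_eventuallyEq ?_
    filter_upwards [Ioi_mem_nhds hy] with z hz using if_pos (le_of_lt hz)

end Calculus

section PartialDerivatives

/-- `h` is of class `C¹` in its second variable on `S`: the partial derivative `∂_y h` exists at
every point of `S`, and `h` and `∂_y h` are jointly continuous on `S`. The derivative at a point of
`S` is two-sided in `y`, so this is meant for sets `S` with open vertical slices. -/
structure ContDiffSndOn (h : ℝ → ℝ → E) (S : Set (ℝ × ℝ)) : Prop where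
  continuousOn : ContinuousOn (uncurry h) S
  differentiableAt : ∀ p ∈ S, DifferentiableAt ℝ (h p.1) p.2
  continuousOn_deriv : ContinuousOn (uncurry fun s => deriv (h s)) S

variable {h : ℝ → ℝ → E} {S T U : Set (ℝ × ℝ)}

lemma ContDiffSndOn.mono (hh : ContDiffSndOn h T) (hST : S ⊆ T) : ContDiffSndOn h S :=
  ⟨hh.continuousOn.mono hST, fun p hp => hh.differentiableAt p (hST hp),
    hh.continuousOn_deriv.mono hST⟩

lemma hasDerivAt_snd_of_differentiableAt_uncurry {p : ℝ × ℝ}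
    (hh : DifferentiableAt ℝ (uncurry h) p) :
    HasDerivAt (h p.1) (fderiv ℝ (uncurry h) p (0, 1)) p.2 :=
  hh.hasFDerivAt.comp_hasDerivAt (f := fun y => (p.1, y)) p.2
    ((hasDerivAt_const p.2 p.1).prodMk (hasDerivAt_id p.2))

lemma contDiffOn_deriv_snd {n : WithTop ℕ∞} (hU : IsOpen U)
    (hh : ContDiffOn ℝ (n + 1) (uncurry h) U) :
    ContDiffOn ℝ n (uncurry fun s => deriv (h s)) U :=
  ((hh.fderiv_of_isOpen hU le_rfl).clm_apply contDiffOn_const).congr fun p hp =>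
    (hasDerivAt_snd_of_differentiableAt_uncurry
      ((hh.contDiffAt (hU.mem_nhds hp)).differentiableAt (by simp))).deriv

lemma contDiffSndOn_of_contDiffOn_one (hU : IsOpen U) (hh : ContDiffOn ℝ 1 (uncurry h) U) :
    ContDiffSndOn h U where
  continuousOn := hh.continuousOn
  differentiableAt p hp := (hasDerivAt_snd_of_differentiableAt_uncurry
    ((hh.contDiffAt (hU.mem_nhds hp)).differentiableAt one_ne_zero)).differentiableAt
  continuousOn_deriv := (contDiffOn_deriv_snd (n := 0) hU (by simpa using hh)).continuousOn

lemma hasDerivAt_intervalIntegral_of_contDiffSndOn {Y : Set ℝ} (hY : IsOpen Y) {s₀ s₁ : ℝ}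
    (hh : ContDiffSndOn h (uIcc s₀ s₁ ×ˢ Y)) {y : ℝ} (hy : y ∈ Y) :
    HasDerivAt (fun y => ∫ s in s₀..s₁, h s y) (∫ s in s₀..s₁, deriv (h s) y) y := by
  obtain ⟨K, hK, hyK, hKY⟩ := exists_compact_subset hY hy
  obtain ⟨C, hC⟩ := (isCompact_uIcc.prod hK).exists_bound_of_continuousOn
    (hh.continuousOn_deriv.mono (prod_mono_right hKY))
  have hmeas : ∀ {k : ℝ → ℝ → E}, ContinuousOn (uncurry k) (uIcc s₀ s₁ ×ˢ Y) → ∀ z ∈ Y,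
      AEStronglyMeasurable (fun s => k s z) (volume.restrict (uIoc s₀ s₁)) := fun hk z hz =>
    ((hk.uncurry_right z hz).mono uIoc_subset_uIcc).aestronglyMeasurable measurableSet_uIoc
  refine (intervalIntegral.hasDerivAt_integral_of_dominated_loc_of_deriv_le
    (F' := fun y s => deriv (h s) y) (bound := fun _ => C) (mem_interior_iff_mem_nhds.1 hyK)
    (eventually_of_mem (hY.mem_nhds hy) (hmeas hh.continuousOn))
    (hh.continuousOn.uncurry_right y hy).intervalIntegrable
    (hmeas hh.continuousOn_deriv y hy) ?_ intervalIntegrable_const ?_).2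
  · exact Eventually.of_forall fun s hs z hz => hC (s, z) ⟨uIoc_subset_uIcc hs, hz⟩
  · exact Eventually.of_forall fun s hs z hz =>
      (hh.differentiableAt (s, z) ⟨uIoc_subset_uIcc hs, hKY hz⟩).hasDerivAt

end PartialDerivatives

section CandidateSolution

variable {a b c x₀ x₁ x y : ℝ} {Y : Set ℝ} {d d' : ℝ → ℝ} {w : ℝ → ℝ → ℝ}

lemma hasDerivAt_uPlus_fst (hw : ContinuousOn (uncurry w) (Icc x₀ x₁ ×ˢ Y)) (hx : x ∈ Ioo x₀ x₁)
    (hy : y ∈ Y) : HasDerivAt (fun x => uPlus d w x₀ x y) (w x y) x := by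
  have hwy : ContinuousOn (fun s => w s y) (Icc x₀ x₁) := hw.uncurry_right y hy
  refine (intervalIntegral.integral_hasDerivAt_right ?_ ?_ ?_).const_add (d y)
  · refine (hwy.mono ?_).intervalIntegrable
    exact uIcc_subset_Icc (left_mem_Icc.2 (hx.1.trans hx.2).le) (Ioo_subset_Icc_self hx)
  · exact (hwy.mono Ioo_subset_Icc_self).stronglyMeasurableAtFilter isOpen_Ioo x hx
  · exact hwy.continuousAt (Icc_mem_nhds hx.1 hx.2)

lemma hasDerivAt_uPlus_snd (hY : IsOpen Y) (hw : ContDiffSndOn w (Icc x₀ x₁ ×ˢ Y))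
    (hx : x ∈ Icc x₀ x₁) (hy : y ∈ Y) (hd : HasDerivAt d (d' y) y) :
    HasDerivAt (uPlus d w x₀ x) (uPlus d' (fun s => deriv (w s)) x₀ x y) y :=
  hd.add <| hasDerivAt_intervalIntegral_of_contDiffSndOn hY (hw.mono <| prod_mono_left <|
    uIcc_subset_Icc (left_mem_Icc.2 (hx.1.trans hx.2)) hx) hy

lemma contDiffOn_uPlus {u₂ : ℝ → ℝ → ℝ} (hY : IsOpen Y)
    (hw : ContinuousOn (uncurry w) (Icc x₀ x₁ ×ˢ Y))
    (hu₂ : ∀ p ∈ Ioo x₀ x₁ ×ˢ Y, HasDerivAt (uPlus d w x₀ p.1) (u₂ p.1 p.2) p.2)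
    (hc : ContinuousOn (uncurry u₂) (Ioo x₀ x₁ ×ˢ Y)) :
    ContDiffOn ℝ 1 (uncurry (uPlus d w x₀)) (Ioo x₀ x₁ ×ˢ Y) :=
  contDiffOn_one_of_hasDerivAt_partial (isOpen_Ioo.prod hY)
    (fun _ hp => hasDerivAt_uPlus_fst hw hp.1 hp.2) hu₂
    (hw.mono (prod_mono_left Ioo_subset_Icc_self)) hc

lemma contDiffOn_uPlus_of_integral_deriv_deriv_eq {g : ℝ → ℝ → ℝ} {g₀ : ℝ → ℝ} (hY : IsOpen Y)
    (hw : ContDiffSndOn w (Icc x₀ x₁ ×ˢ Y))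
    (hwy : ContDiffSndOn (fun s => deriv (w s)) (Icc x₀ x₁ ×ˢ Y))
    (hg : ContinuousOn (uncurry g) (Ioo x₀ x₁ ×ˢ Y))
    (hint : ∀ x ∈ Ioo x₀ x₁, ∀ y ∈ Y, ∫ s in x₀..x, deriv (deriv (w s)) y = g x y - g₀ y)
    (hd : ∀ y ∈ Y, HasDerivAt d (d' y) y) (hd' : ∀ y ∈ Y, HasDerivAt d' (g₀ y) y) :
    ContDiffOn ℝ 1 (uncurry (uPlus d w x₀)) (Ioo x₀ x₁ ×ˢ Y) ∧
      (∀ x ∈ Ioo x₀ x₁, ContDiffOn ℝ 2 (uPlus d w x₀ x) Y) ∧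
      ∀ p ∈ Ioo x₀ x₁ ×ˢ Y, deriv (deriv (uPlus d w x₀ p.1)) p.2 = g p.1 p.2 := by
  set v := uPlus d' (fun s => deriv (w s)) x₀
  have hu : ∀ x ∈ Ioo x₀ x₁, ∀ y ∈ Y, HasDerivAt (uPlus d w x₀ x) (v x y) y := fun x hx y hy =>
    hasDerivAt_uPlus_snd hY hw (Ioo_subset_Icc_self hx) hy (hd y hy)
  have hv : ∀ x ∈ Ioo x₀ x₁, ∀ y ∈ Y, HasDerivAt (v x) (g x y) y := fun x hx y hy =>
    (hasDerivAt_uPlus_snd hY hwy (Ioo_subset_Icc_self hx) hy (hd' y hy)).congr_deriv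
      (by rw [uPlus, hint x hx y hy, add_sub_cancel])
  -- `v = ∂_y u` has continuous partial derivatives `∂_y w` and `g`, hence is itself continuous.
  have hvC1 : ContDiffOn ℝ 1 (uncurry v) (Ioo x₀ x₁ ×ˢ Y) :=
    contDiffOn_uPlus hY hwy.continuousOn (fun p hp => hv p.1 hp.1 p.2 hp.2) hg
  exact ⟨contDiffOn_uPlus hY hw.continuousOn (fun p hp => hu p.1 hp.1 p.2 hp.2) hvC1.continuousOn,
    fun x hx => contDiffOn_two_of_hasDerivAt hY (hu x hx) (hv x hx) (hg.uncurry_left x hx),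
    fun p hp => deriv_deriv_eq_of_hasDerivAt hY (hu p.1 hp.1) (hv p.1 hp.1) hp.2⟩

lemma uMinus_add_integral {δ₁ : ℝ → ℝ} (hw : ContinuousOn (fun s => w s y) (Icc x₀ x₁))
    (hx : x ∈ Icc x₀ x₁) :
    uMinus δ₁ w x₁ x₀ y + ∫ s in x₀..x, w s y = uMinus δ₁ w x₁ x y := by
  have hleft : IntervalIntegrable (fun s => w s y) volume x₀ x :=
    (hw.mono (Icc_subset_Icc_right hx.2)).intervalIntegrable_of_Icc hx.1
  have hright : IntervalIntegrable (fun s => w s y) volume x x₁ :=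
    (hw.mono (Icc_subset_Icc_left hx.1)).intervalIntegrable_of_Icc hx.2
  rw [uMinus, uMinus, ← intervalIntegral.integral_add_adjacent_intervals hleft hright]
  ring

/-- The trace on `{x = x₀}` of the candidate `ũ` glued along `{y = c}`: it is `δ₀` for `y ≥ c`, and
the value at `x₀` of the lower candidate for `y < c`. The extension `u` is obtained by integrating
`w` in `x` from this trace, i.e. `u = uPlus (gluedTrace c δ₀ δ₁ w x₀ x₁) w x₀`. -/
noncomputable def gluedTrace (c : ℝ) (δ₀ δ₁ : ℝ → ℝ) (w : ℝ → ℝ → ℝ) (x₀ x₁ y : ℝ) : ℝ :=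
  if c ≤ y then δ₀ y else uMinus δ₁ w x₁ x₀ y

variable {δ₀ δ₁ δ₀' δ₁' : ℝ → ℝ}

lemma uPlus_gluedTrace_of_le (hy : c ≤ y) :
    uPlus (gluedTrace c δ₀ δ₁ w x₀ x₁) w x₀ x y = uPlus δ₀ w x₀ x y := by
  rw [uPlus, uPlus, gluedTrace, if_pos hy]

lemma uPlus_gluedTrace_of_lt (hw : ContinuousOn (fun s => w s y) (Icc x₀ x₁))
    (hx : x ∈ Icc x₀ x₁) (hy : y < c) :
    uPlus (gluedTrace c δ₀ δ₁ w x₀ x₁) w x₀ x y = uMinus δ₁ w x₁ x y := by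
  rw [uPlus, gluedTrace, if_neg hy.not_ge, uMinus_add_integral hw hx]

lemma hasDerivAt_gluedTrace (hw : ContDiffSndOn w (uIcc x₀ x₁ ×ˢ Ioo a b))
    (hδ₀ : ∀ z ∈ Ico c b, HasDerivWithinAt δ₀ (δ₀' z) (Ico c b) z)
    (hδ₁ : ∀ z ∈ Ioc a c, HasDerivWithinAt δ₁ (δ₁' z) (Ioc a c) z)
    (hjump : δ₀ c - δ₁ c + ∫ s in x₀..x₁, w s c = 0)
    (hjump' : δ₀' c - δ₁' c + ∫ s in x₀..x₁, deriv (w s) c = 0) (hy : y ∈ Ioo a b) :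
    HasDerivAt (gluedTrace c δ₀ δ₁ w x₀ x₁)
      (gluedTrace c δ₀' δ₁' (fun s => deriv (w s)) x₀ x₁ y) y := by
  refine hasDerivAt_ite_le (fun hcy => ?_) (fun hyc => ?_) ?_ ?_
  · exact (hδ₀ y ⟨hcy, hy.2⟩).mono_of_mem_nhdsWithin (inter_mem_nhdsWithin _ (Iio_mem_nhds hy.2))
  · refine HasDerivWithinAt.sub ?_
      (hasDerivAt_intervalIntegral_of_contDiffSndOn isOpen_Ioo hw hy).hasDerivWithinAt
    exact (hδ₁ y ⟨hy.1, hyc⟩).mono_of_mem_nhdsWithin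
      (inter_mem (mem_nhdsWithin_of_mem_nhds (Ioi_mem_nhds hy.1)) self_mem_nhdsWithin)
  · rw [uMinus]
    linarith
  · rw [uMinus]
    linarith

lemma hasDerivAt_gluedTrace_of_integral_deriv_eq {g₀ g₁ : ℝ → ℝ}
    (hw : ContDiffSndOn w (uIcc x₀ x₁ ×ˢ Ioo a b))
    (hδ₀ : ∀ z ∈ Ico c b, HasDerivWithinAt δ₀ (g₀ z) (Ico c b) z)
    (hδ₁ : ∀ z ∈ Ioc a c, HasDerivWithinAt δ₁ (g₁ z) (Ioc a c) z)
    (hint : ∀ z ∈ Ioo a b, ∫ s in x₀..x₁, deriv (w s) z = g₁ z - g₀ z)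
    (hjump : δ₀ c - δ₁ c + ∫ s in x₀..x₁, w s c = 0) (hc : c ∈ Ioo a b) (hy : y ∈ Ioo a b) :
    HasDerivAt (gluedTrace c δ₀ δ₁ w x₀ x₁) (g₀ y) y := by
  refine (hasDerivAt_gluedTrace hw hδ₀ hδ₁ hjump ?_ hy).congr_deriv ?_
  · rw [hint c hc]
    ring
  · rw [gluedTrace, uMinus, hint y hy, sub_sub_cancel, ite_self]

lemma exists_hasDerivAt_gluedTrace {g₀ g₁ : ℝ → ℝ} (hc : c ∈ Ioo a b)
    (hw : ContDiffSndOn w (uIcc x₀ x₁ ×ˢ Ioo a b))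
    (hwy : ContDiffSndOn (fun s => deriv (w s)) (uIcc x₀ x₁ ×ˢ Ioo a b))
    (hδ₀ : ContDiffOn ℝ 2 δ₀ (Ico c b)) (hδ₁ : ContDiffOn ℝ 2 δ₁ (Ioc a c))
    (hg₀ : ContinuousOn g₀ (Ico c b)) (hg₁ : ContinuousOn g₁ (Ioc a c))
    (hδ₀g₀ : ∀ y ∈ Ioo c b, deriv (deriv δ₀) y = g₀ y)
    (hδ₁g₁ : ∀ y ∈ Ioo a c, deriv (deriv δ₁) y = g₁ y)
    (hint : ∀ y ∈ Ioo a b, ∫ s in x₀..x₁, deriv (deriv (w s)) y = g₁ y - g₀ y)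
    (hjump : δ₀ c - δ₁ c + ∫ s in x₀..x₁, w s c = 0)
    (hjump' : derivWithin δ₀ (Ico c b) c - derivWithin δ₁ (Ioc a c) c
      + ∫ s in x₀..x₁, deriv (w s) c = 0) :
    ∃ d' : ℝ → ℝ, (∀ y ∈ Ioo a b, HasDerivAt (gluedTrace c δ₀ δ₁ w x₀ x₁) (d' y) y) ∧
      ∀ y ∈ Ioo a b, HasDerivAt d' (g₀ y) y := by
  have hδ₀' : ∀ y ∈ Ico c b, HasDerivWithinAt (derivWithin δ₀ (Ico c b)) (g₀ y) (Ico c b) y :=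
    fun y => hasDerivWithinAt_derivWithin_of_deriv_deriv_eq (uniqueDiffOn_Ico c b)
      (by rw [interior_Ico, closure_Ioo hc.2.ne]; exact Ico_subset_Icc_self) hδ₀ hg₀
      (by rwa [interior_Ico])
  have hδ₁' : ∀ y ∈ Ioc a c, HasDerivWithinAt (derivWithin δ₁ (Ioc a c)) (g₁ y) (Ioc a c) y :=
    fun y => hasDerivWithinAt_derivWithin_of_deriv_deriv_eq (uniqueDiffOn_Ioc a c)
      (by rw [interior_Ioc, closure_Ioo hc.1.ne]; exact Ioc_subset_Icc_self) hδ₁ hg₁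
      (by rwa [interior_Ioc])
  exact ⟨gluedTrace c (derivWithin δ₀ (Ico c b)) (derivWithin δ₁ (Ioc a c))
      (fun s => deriv (w s)) x₀ x₁,
    fun y => hasDerivAt_gluedTrace hw
      (fun z hz => (hδ₀.differentiableOn two_ne_zero z hz).hasDerivWithinAt)
      (fun z hz => (hδ₁.differentiableOn two_ne_zero z hz).hasDerivWithinAt) hjump hjump',
    fun y => hasDerivAt_gluedTrace_of_integral_deriv_eq hwy hδ₀' hδ₁' hint hjump' hc⟩

lemma integral_deriv_deriv_snd_eq {α : ℝ → ℝ} {f : ℝ → ℝ → ℝ}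
    (hw : ContinuousOn (fun s => w s y) (Icc x₀ x₁))
    (hwyy : ContinuousOn (fun s => deriv (deriv (w s)) y) (Icc x₀ x₁))
    (hwx : DifferentiableOn ℝ (fun s => w s y) (Ioo x₀ x₁))
    (hf : ContinuousOn (fun s => f s y) (Icc x₀ x₁))
    (hfx : DifferentiableOn ℝ (fun s => f s y) (Ioo x₀ x₁))
    (hweq : ∀ s ∈ Ioo x₀ x₁, α y * deriv (fun s => w s y) s - deriv (deriv (w s)) y
      = deriv (fun s => f s y) s)
    (hx : x ∈ Icc x₀ x₁) :
    ∫ s in x₀..x, deriv (deriv (w s)) y = α y * w x y - f x y - (α y * w x₀ y - f x₀ y) := by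
  have hsub : Icc x₀ x ⊆ Icc x₀ x₁ := Icc_subset_Icc_right hx.2
  refine intervalIntegral.integral_eq_sub_of_hasDerivAt_of_le hx.1
    (f := fun s => α y * w s y - f s y) (((continuousOn_const.mul hw).sub hf).mono hsub)
    (fun s hs => ?_) ((hwyy.mono hsub).intervalIntegrable_of_Icc hx.1)
  have hs₁ : s ∈ Ioo x₀ x₁ := ⟨hs.1, hs.2.trans_le hx.2⟩
  have hnhds : Ioo x₀ x₁ ∈ 𝓝 s := isOpen_Ioo.mem_nhds hs₁
  refine (((hwx.hasDerivAt hnhds).const_mul (α y)).sub (hfx.hasDerivAt hnhds)).congr_deriv ?_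
  linarith [hweq s hs₁]

end CandidateSolution

theorem stmt15_general {x₀ x₁ a b c : ℝ} (hx : x₀ ≤ x₁) (hc : c ∈ Ioo a b) {α : ℝ → ℝ}
    (hα : ContinuousOn α (Ioo a b)) {f w : ℝ → ℝ → ℝ} {δ₀ δ₁ : ℝ → ℝ}
    (hf : ContinuousOn (uncurry f) (Icc x₀ x₁ ×ˢ Ioo a b))
    (hfx : ∀ y ∈ Ioo a b, DifferentiableOn ℝ (fun s => f s y) (Ioo x₀ x₁))
    (hd₀ : ContDiffOn ℝ 2 δ₀ (Ico c b)) (hd₁ : ContDiffOn ℝ 2 δ₁ (Ioc a c))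
    (hw : ContDiffSndOn w (Icc x₀ x₁ ×ˢ Ioo a b))
    (hwy : ContDiffSndOn (fun s => deriv (w s)) (Icc x₀ x₁ ×ˢ Ioo a b))
    (hwx : ∀ y ∈ Ioo a b, DifferentiableOn ℝ (fun s => w s y) (Ioo x₀ x₁))
    (hweq : ∀ p ∈ Ioo x₀ x₁ ×ˢ Ioo a b,
      α p.2 * deriv (fun s => w s p.2) p.1 - deriv (deriv (w p.1)) p.2
        = deriv (fun s => f s p.2) p.1)
    (hwbc0 : ∀ y ∈ Ioo c b, α y * w x₀ y = f x₀ y + deriv (deriv δ₀) y)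
    (hwbc1 : ∀ y ∈ Ioo a c, α y * w x₁ y = f x₁ y + deriv (deriv δ₁) y)
    (horth0 : δ₀ c - δ₁ c + ∫ s in x₀..x₁, w s c = 0)
    (horth1 : derivWithin δ₀ (Ico c b) c - derivWithin δ₁ (Ioc a c) c
        + ∫ s in x₀..x₁, deriv (w s) c = 0) :
    ∃ u : ℝ → ℝ → ℝ,
      ContDiffOn ℝ 1 (uncurry u) (Ioo x₀ x₁ ×ˢ Ioo a b) ∧
      (∀ x ∈ Ioo x₀ x₁, ContDiffOn ℝ 2 (u x) (Ioo a b)) ∧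
      ContinuousOn (fun p : ℝ × ℝ => deriv (deriv (u p.1)) p.2) (Ioo x₀ x₁ ×ˢ Ioo a b) ∧
      (∀ x ∈ Ioo x₀ x₁, ∀ y ∈ Ioo c b, u x y = uPlus δ₀ w x₀ x y) ∧
      (∀ x ∈ Ioo x₀ x₁, ∀ y ∈ Ioo a c, u x y = uMinus δ₁ w x₁ x y) ∧
      (∀ p ∈ Ioo x₀ x₁ ×ˢ Ioo a b,
        α p.2 * deriv (fun s => u s p.2) p.1 - deriv (deriv (u p.1)) p.2 = f p.1 p.2) := by
  set g : ℝ → ℝ → ℝ := fun x y => α y * w x y - f x y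
  have hg : ContinuousOn (uncurry g) (Icc x₀ x₁ ×ˢ Ioo a b) :=
    ((hα.comp continuousOn_snd fun _ hp => hp.2).mul hw.continuousOn).sub hf
  have hgΩ : ContinuousOn (uncurry g) (Ioo x₀ x₁ ×ˢ Ioo a b) :=
    hg.mono (prod_mono_left Ioo_subset_Icc_self)
  have hint : ∀ x ∈ Icc x₀ x₁, ∀ y ∈ Ioo a b,
      ∫ s in x₀..x, deriv (deriv (w s)) y = g x y - g x₀ y := fun x hxx y hy =>
    integral_deriv_deriv_snd_eq (hw.continuousOn.uncurry_right y hy)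
      (hwy.continuousOn_deriv.uncurry_right y hy) (hwx y hy) (hf.uncurry_right y hy) (hfx y hy)
      (fun s hs => hweq (s, y) ⟨hs, hy⟩) hxx
  obtain ⟨d', hd, hd'⟩ := exists_hasDerivAt_gluedTrace hc (by rwa [uIcc_of_le hx])
    (by rwa [uIcc_of_le hx]) hd₀ hd₁
    ((hg.uncurry_left x₀ (left_mem_Icc.2 hx)).mono (Ico_subset_Ioo_left hc.1))
    ((hg.uncurry_left x₁ (right_mem_Icc.2 hx)).mono (Ioc_subset_Ioo_right hc.2))
    (fun y hy => eq_sub_of_add_eq' (hwbc0 y hy).symm)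
    (fun y hy => eq_sub_of_add_eq' (hwbc1 y hy).symm) (hint x₁ (right_mem_Icc.2 hx)) horth0 horth1
  obtain ⟨huC1, huC2, huyy⟩ := contDiffOn_uPlus_of_integral_deriv_deriv_eq isOpen_Ioo hw hwy hgΩ
    (fun x hxx => hint x (Ioo_subset_Icc_self hxx)) hd hd'
  refine ⟨_, huC1, huC2, hgΩ.congr huyy, fun x _ y hy => uPlus_gluedTrace_of_le hy.1.le,
    fun x hxx y hy => uPlus_gluedTrace_of_lt (hw.continuousOn.uncurry_right y ?_)
      (Ioo_subset_Icc_self hxx) hy.2, fun p hp => ?_⟩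
  · exact Ioo_subset_Ioo_right hc.2.le hy
  · rw [huyy p hp, (hasDerivAt_uPlus_fst hw.continuousOn hp.1 hp.2).deriv, sub_sub_cancel]

/-- Under the two orthogonality conditions (vanishing of the jumps of `ũ` and `∂_y ũ`
across `{y = 0}`), the candidate `ũ` built from `w` extends to a solution `u` of
`y ∂ₓ u - ∂_yy u = f` on all of `Ω = (x₀,x₁) × (-1,1)`, including the line `{y = 0}`;
`u` is `C¹` on `Ω`, `C²` with respect to `y` on `Ω`, and coincides with `ũ` off `{y = 0}`. -/
theorem stmt15 (x₀ x₁ : ℝ) (hx : x₀ < x₁) (f w : ℝ → ℝ → ℝ) (δ₀ δ₁ : ℝ → ℝ)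
    (Uf : Set (ℝ × ℝ)) (hUf : IsOpen Uf)
    (hΩUf : closure (Ioo x₀ x₁ ×ˢ Ioo (-1 : ℝ) 1) ⊆ Uf)
    (hf : ContDiffOn ℝ 1 (fun p : ℝ × ℝ => f p.1 p.2) Uf)
    (hd₀ : ContDiffOn ℝ 2 δ₀ (Icc (0 : ℝ) 1))
    (hd₁ : ContDiffOn ℝ 2 δ₁ (Icc (-1 : ℝ) 0))
    (Uw : Set (ℝ × ℝ)) (hUw : IsOpen Uw)
    (hΩUw : closure (Ioo x₀ x₁ ×ˢ Ioo (-1 : ℝ) 1) ⊆ Uw)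
    (hw : ContDiffOn ℝ 2 (fun p : ℝ × ℝ => w p.1 p.2) Uw)
    (hweq : ∀ p ∈ Ioo x₀ x₁ ×ˢ Ioo (-1 : ℝ) 1,
      p.2 * deriv (fun s : ℝ => w s p.2) p.1 - deriv (deriv (w p.1)) p.2
        = deriv (fun s : ℝ => f s p.2) p.1)
    (hwbc0 : ∀ y ∈ Ioo (0 : ℝ) 1, y * w x₀ y = f x₀ y + deriv (deriv δ₀) y)
    (hwbc1 : ∀ y ∈ Ioo (-1 : ℝ) 0, y * w x₁ y = f x₁ y + deriv (deriv δ₁) y)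
    (horth0 : δ₀ 0 - δ₁ 0 + ∫ s in x₀..x₁, w s 0 = 0)
    (horth1 : derivWithin δ₀ (Icc (0 : ℝ) 1) 0 - derivWithin δ₁ (Icc (-1 : ℝ) 0) 0
        + ∫ s in x₀..x₁, deriv (w s) 0 = 0) :
    ∃ u : ℝ → ℝ → ℝ,
      ContDiffOn ℝ 1 (fun p : ℝ × ℝ => u p.1 p.2) (Ioo x₀ x₁ ×ˢ Ioo (-1 : ℝ) 1) ∧
      (∀ x ∈ Ioo x₀ x₁, ContDiffOn ℝ 2 (u x) (Ioo (-1 : ℝ) 1)) ∧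
      ContinuousOn (fun p : ℝ × ℝ => deriv (deriv (u p.1)) p.2)
        (Ioo x₀ x₁ ×ˢ Ioo (-1 : ℝ) 1) ∧
      (∀ x ∈ Ioo x₀ x₁, ∀ y ∈ Ioo (0 : ℝ) 1, u x y = uPlus δ₀ w x₀ x y) ∧
      (∀ x ∈ Ioo x₀ x₁, ∀ y ∈ Ioo (-1 : ℝ) 0, u x y = uMinus δ₁ w x₁ x y) ∧
      (∀ p ∈ Ioo x₀ x₁ ×ˢ Ioo (-1 : ℝ) 1,
        p.2 * deriv (fun s : ℝ => u s p.2) p.1 - deriv (deriv (u p.1)) p.2 = f p.1 p.2) := by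
  have hΩ : Icc x₀ x₁ ×ˢ Ioo (-1 : ℝ) 1 ⊆ closure (Ioo x₀ x₁ ×ˢ Ioo (-1 : ℝ) 1) := by
    rw [closure_prod_eq, closure_Ioo hx.ne]
    exact prod_mono_right subset_closure
  have hw₁ : ContDiffOn ℝ 1 (uncurry w) Uw := hw.of_le one_le_two
  rw [← derivWithin_Ico_left one_pos, ← derivWithin_Ioc_right neg_one_lt_zero] at horth1
  exact stmt15_general hx.le ⟨neg_one_lt_zero, one_pos⟩ continuousOn_id
    (hf.continuousOn.mono (hΩ.trans hΩUf))
    (fun y hy => differentiableOn_slice_fst (hf.differentiableOn one_ne_zero)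
      fun s hs => hΩUf (subset_closure ⟨hs, hy⟩))
    (hd₀.mono Ico_subset_Icc_self) (hd₁.mono Ioc_subset_Icc_self)
    ((contDiffSndOn_of_contDiffOn_one hUw hw₁).mono (hΩ.trans hΩUw))
    ((contDiffSndOn_of_contDiffOn_one hUw (contDiffOn_deriv_snd hUw hw)).mono (hΩ.trans hΩUw))
    (fun y hy => differentiableOn_slice_fst (hw₁.differentiableOn one_ne_zero)
      fun s hs => hΩUw (subset_closure ⟨hs, hy⟩))
    hweq hwbc0 hwbc1 horth0 horth1
end
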